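/- arXiv:math/0701149 — 2 statements merged into one kernel-verified Lean document; each statement's English description precedes it below -/
import Mathlib

section
/- For every positive integer n, the number of decompositions of n equals the number of odd divisors of n. -/
/-- `IsDecomp n a m` means the `m` consecutive positive integers
`a+1, a+2, …, a+m` form a decomposition of `n`. -/
def IsDecomp (n a m : ℕ) : Prop :=
  1 ≤ m ∧ (Finset.range m).sum (fun i => a + i + 1) = n

theorem isDecomp_iff_aux (n a m : ℕ) : IsDecomp n a m ↔ 1 ≤ m ∧ m * (2 * a + m + 1) = 2 * n := by
  have h : 2 * (Finset.range m).sum (fun i => a + i + 1) = m * (2 * a + m + 1) := by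
    induction m with
    | zero => simp
    | succ k ih => rw [Finset.sum_range_succ, mul_add, ih]; ring
  unfold IsDecomp
  rw [← h]
  constructor
  · rintro ⟨h1, h2⟩; exact ⟨h1, by omega⟩
  · rintro ⟨h1, h2⟩; exact ⟨h1, by omega⟩

/-- For every positive integer `n`, the number of decompositions of `n` equals
the number of odd divisors of `n`. -/
theorem card_decompositions_eq_card_odd_divisors (n : ℕ) (hn : 0 < n) :
    {p : ℕ × ℕ | IsDecomp n p.1 p.2}.ncard = (n.divisors.filter (fun k => Odd k)).card := by
  rw [← Set.ncard_coe_finset]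
  have key : ∀ d : ℕ, Odd d → d ∣ 2 * n → d ∣ n := fun d hd h =>
    (Nat.Coprime.dvd_of_dvd_mul_left (Nat.coprime_two_right.mpr hd) h)
  refine Set.ncard_congr (fun p _ => if Odd p.2 then p.2 else 2 * p.1 + p.2 + 1) ?_ ?_ ?_
  · rintro ⟨a, m⟩ h
    simp only [Set.mem_ofPred_eq, isDecomp_iff_aux] at h
    obtain ⟨h1, h2⟩ := h
    simp only [Finset.coe_filter, Set.mem_ofPred_eq, Nat.mem_divisors]
    split_ifs with ho
    · exact ⟨⟨key _ ho ⟨_, h2.symm⟩, hn.ne'⟩, ho⟩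
    · have ho' : Odd (2 * a + m + 1) := by
        rw [Nat.odd_iff] at *; omega
      exact ⟨⟨key _ ho' ⟨m, by rw [← h2]; ring⟩, hn.ne'⟩, ho'⟩
  · rintro ⟨a, m⟩ ⟨b, k⟩ h h' he
    simp only [Set.mem_ofPred_eq, isDecomp_iff_aux] at h h'
    obtain ⟨h1, h2⟩ := h
    obtain ⟨h3, h4⟩ := h'
    rw [← h4] at h2
    simp only at he
    rw [Prod.mk.injEq]
    split_ifs at he with ho ho' ho'
    · subst he
      have := Nat.eq_of_mul_eq_mul_left h1 h2
      omega
    · rw [← he, mul_comm k] at h2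
      have := Nat.eq_of_mul_eq_mul_left h1 h2
      omega
    · rw [he, mul_comm m] at h2
      have := Nat.eq_of_mul_eq_mul_left h3 h2
      omega
    · rw [he] at h2
      have := Nat.eq_of_mul_eq_mul_right (by omega) h2
      omega
  · intro d hd
    simp only [Finset.coe_filter, Set.mem_ofPred_eq, Nat.mem_divisors] at hd
    obtain ⟨⟨⟨c, hc⟩, -⟩, ho⟩ := hd
    have hc0 : 0 < c := by
      rcases Nat.eq_zero_or_pos c with h | h
      · subst h; omega
      · exact h
    have ho2 := Nat.odd_iff.mp ho
    rcases lt_or_ge d (2 * c) with hlt | hge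
    · refine ⟨((2 * c - d - 1) / 2, d), ?_, ?_⟩
      · simp only [Set.mem_ofPred_eq, isDecomp_iff_aux]
        refine ⟨by omega, ?_⟩
        have : 2 * ((2 * c - d - 1) / 2) + d + 1 = 2 * c := by omega
        rw [this, hc]; ring
      · simp [ho]
    · have : 2 * ((d - 2 * c - 1) / 2) + 2 * c + 1 = d := by omega
      refine ⟨((d - 2 * c - 1) / 2, 2 * c), ?_, ?_⟩
      · simp only [Set.mem_ofPred_eq, isDecomp_iff_aux]
        refine ⟨by omega, ?_⟩
        rw [this, hc]; ring
      · have hne : ¬ Odd (2 * c) := by rw [Nat.odd_iff]; omega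
        simp only [hne, if_false]
        exact this
end

section
/- Let n be a positive integer that is not a power of 2, let p be the smallest odd prime factor of n, and let d be the 2-adic valuation of n. Then the smallest element of Lspec(n) other than 1 (i.e., the length of the shortest nontrivial decomposition of n) is min(p, 2^(d+1)). -/
/-- The length spectrum of `n`: the set of lengths of decompositions of `n`. -/
def Lspec (n : ℕ) : Set ℕ := {m | ∃ a, IsDecomp n a m}

theorem lspec_sum (a m : ℕ) :
    2 * (Finset.range m).sum (fun i => a + i + 1) = m * (2 * a + m + 1) := by
  induction m with
  | zero => simp
  | succ k ih => rw [Finset.sum_range_succ, mul_add, ih]; ring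

theorem mem_lspec_iff (n m : ℕ) :
    m ∈ Lspec n ↔ 1 ≤ m ∧ ∃ a, 2 * n = m * (2 * a + m + 1) := by
  constructor
  · rintro ⟨a, h1, h2⟩
    exact ⟨h1, a, by rw [← h2, lspec_sum]⟩
  · rintro ⟨h1, a, h2⟩
    refine ⟨a, h1, ?_⟩
    have := lspec_sum a m
    omega

/-- Let `n` be a positive integer that is not a power of 2, let `p` be the
smallest odd prime factor of `n`, and let `d` be the 2-adic valuation of `n`.
Then the smallest element of `Lspec n` other than `1` (the length of the
shortest nontrivial decomposition of `n`) is `min p (2^(d+1))`. -/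
theorem shortest_nontrivial_decomposition (n p d : ℕ) (hn : 0 < n)
    (hnot : ¬ ∃ e : ℕ, n = 2 ^ e)
    (hp : p.Prime ∧ Odd p ∧ p ∣ n ∧ ∀ q : ℕ, q.Prime → Odd q → q ∣ n → p ≤ q)
    (hd : d = padicValNat 2 n) :
    IsLeast {m | m ∈ Lspec n ∧ m ≠ 1} (min p (2 ^ (d + 1))) := by
  obtain ⟨hpp, hpo, hpn, hmin⟩ := hp
  have hdvd : 2 ^ d ∣ n := hd ▸ pow_padicValNat_dvd
  have hndvd : ¬ 2 ^ (d + 1) ∣ n := hd ▸ pow_succ_padicValNat_not_dvd hn.ne'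
  obtain ⟨k, hk⟩ := hdvd
  have hkodd : Odd k := by
    rw [← Nat.not_even_iff_odd]
    rintro ⟨t, ht⟩
    exact hndvd ⟨t, by rw [hk, ht]; ring⟩
  have hp2 : Nat.Coprime p (2 ^ d) := (Nat.coprime_two_right.mpr hpo).pow_right d
  have hpk : p ∣ k := hp2.dvd_of_dvd_mul_left (hk ▸ hpn)
  have hpk' : p ≤ k := Nat.le_of_dvd hkodd.pos hpk
  have hpow : 2 ^ (d + 1) = 2 * 2 ^ d := by ring
  have hpos : 0 < 2 ^ d := by positivity
  constructor
  · rcases lt_or_ge p (2 ^ (d + 1)) with h | h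
    · rw [min_eq_left h.le]
      refine ⟨(mem_lspec_iff _ _).2 ⟨hpp.one_le, ?_⟩, hpp.one_lt.ne'⟩
      obtain ⟨t, ht⟩ := hpk
      have htpos : 0 < t := by
        rcases Nat.eq_zero_or_pos t with h0 | h0
        · subst h0; have := hkodd.pos; simp at ht; omega
        · exact h0
      have hj : 2 ^ d ≤ 2 ^ d * t := Nat.le_mul_of_pos_right _ htpos
      obtain ⟨r, hr⟩ := hpo
      refine ⟨2 ^ d * t - (r + 1), ?_⟩
      have e : 2 * (2 ^ d * t - (r + 1)) + p + 1 = 2 * (2 ^ d * t) := by omega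
      rw [e, hk, ht]; ring
    · rw [min_eq_right h]
      refine ⟨(mem_lspec_iff _ _).2 ⟨Nat.one_le_two_pow, ?_⟩, by omega⟩
      obtain ⟨r, hr⟩ := hkodd
      refine ⟨r - 2 ^ d, ?_⟩
      have e : 2 * (r - 2 ^ d) + 2 ^ (d + 1) + 1 = k := by omega
      rw [e, hk]; ring
  · rintro m ⟨hm, hm1⟩
    obtain ⟨h1, a, ha⟩ := (mem_lspec_iff _ _).1 hm
    rcases Nat.even_or_odd m with he | ho
    · apply min_le_of_right_le
      have hodd : Odd (2 * a + m + 1) := by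
        obtain ⟨r, hr⟩ := he
        exact ⟨a + r, by omega⟩
      have hc : Nat.Coprime (2 ^ (d + 1)) (2 * a + m + 1) :=
        (Nat.coprime_two_left.mpr hodd).pow_left _
      refine Nat.le_of_dvd h1 (hc.dvd_of_dvd_mul_right ?_)
      rw [← ha, hk]
      exact ⟨k, by ring⟩
    · apply min_le_of_left_le
      have hmn : m ∣ n :=
        (Nat.coprime_two_right.mpr ho).dvd_of_dvd_mul_left ⟨_, ha⟩
      have hf := Nat.minFac_dvd m
      exact (hmin _ (Nat.minFac_prime hm1) (Odd.of_dvd_nat ho hf) (hf.trans hmn)).trans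
        (Nat.minFac_le h1)
end
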